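/- arXiv:1802.08666 — 6 statements merged into one kernel-verified Lean document; each statement's English description precedes it below -/
import Mathlib

section
/- Let P be a monic polynomial of degree d ≥ 1 with integer coefficients that is irreducible over ℚ and has d distinct real roots ξ_1, …, ξ_d, let V be the d×d Vandermonde matrix with entries V_{ij} = ξ_i^{j-1}, and let V^{-⊤} denote the inverse transpose of V. Then Nm(V^{-⊤}) = |det V|^{-2}, i.e. the infimum over nonzero integer vectors k ∈ ℤ^d of |∏_{i=1}^d (V^{-⊤}k)_i| equals |det V|^{-2}. -/
/-!
Let `a_m` be the coefficients of `P` and let `C` be the integer Hankel matrix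
`C_{lj} = a_{l+j+1}` (zero once `l + j ≥ d`). The Bézout-type identity
`(x - y) ∑_{j,l} a_{j+l+1} x^j y^l = P(x) - P(y)` shows that `V C Vᵀ` is a diagonal matrix
`diag(δ_i)` (in fact `δ_i = P'(ξ_i)`). Reversing the columns of `C` makes it upper unitriangular,
so `|det C| = 1` and `∏ |δ_i| = |det V|²`.

Hence `δ_i (V⁻ᵀ k)_i = (V C k)_i = q(ξ_i)`, where `q` is the integer polynomial with coefficient
vector `C k`, and `|∏ (V⁻ᵀ k)_i| = |∏ q(ξ_i)| / |det V|²`. The numerator is the resultant of `P`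
and `q`, hence an integer, and it is nonzero because `q ≠ 0` has degree below that of the minimal
polynomial `P` of each `ξ_i`. So it is at least `1`, with equality for `k = e_{d-1}`, for which
`q = 1`.
-/

open Polynomial Matrix

/-- The integer Hankel matrix `C_{lj} = a_{l+j+1}` of coefficients of `P`. Its columns list the
coefficients of the Horner quotients arising from the division of `P` by `X - ξ`. -/
def coeffHankel (d : ℕ) (P : ℤ[X]) : Matrix (Fin d) (Fin d) ℤ :=
  Matrix.of fun l j => P.coeff (l + j + 1)

/-- The columns in reverse order form an upper unitriangular matrix. -/
lemma abs_det_coeffHankel (d : ℕ) (P : ℤ[X]) (hmonic : P.Monic) (hdeg : P.natDegree = d) :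
    |(coeffHankel d P).det| = 1 := by
  rw [← Matrix.abs_det_submatrix_equiv_equiv (Equiv.refl _) Fin.revPerm,
    Matrix.det_of_isUpperTriangular]
  · rw [Finset.prod_eq_one, abs_one]
    intro i _
    have h : (i : ℕ) + (d - (i + 1)) + 1 = P.natDegree := by omega
    simp [coeffHankel, Fin.val_rev, h, hmonic.coeff_natDegree]
  · intro i j hij
    have h : P.natDegree < (i : ℕ) + (d - (j + 1)) + 1 := by
      have : (j : ℕ) < i := hij
      omega
    simp [coeffHankel, Fin.val_rev, coeff_eq_zero_of_natDegree_lt h]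

/-- The two-variable identity `(x - y) ∑_{j,l} a_{j+l+1} x^j y^l = P(x) - P(y)`. -/
lemma sub_mul_sum_coeff (d : ℕ) (P : ℤ[X]) (hdeg : P.natDegree = d) (hd : 1 ≤ d) (x y : ℝ) :
    (x - y) * ∑ l ∈ Finset.range d, ∑ j ∈ Finset.range d,
      (P.coeff (l + j + 1) : ℝ) * y ^ l * x ^ j = aeval x P - aeval y P := by
  -- Both sums telescope: `f (j+1) l - f j (l+1)` is the contribution of the pair `(j, l)`.
  set f : ℕ → ℕ → ℝ := fun j l => (P.coeff (j + l) : ℝ) * y ^ l * x ^ j with hf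
  have key : (x - y) * ∑ l ∈ Finset.range d, ∑ j ∈ Finset.range d,
      (P.coeff (l + j + 1) : ℝ) * y ^ l * x ^ j =
      ∑ l ∈ Finset.range d, ∑ j ∈ Finset.range d, (f (j + 1) l - f j l)
      - ∑ j ∈ Finset.range d, ∑ l ∈ Finset.range d, (f j (l + 1) - f j l) := by
    rw [Finset.sum_comm (s := Finset.range d) (t := Finset.range d)
      (f := fun j l => f j (l + 1) - f j l), ← Finset.sum_sub_distrib, Finset.mul_sum]
    refine Finset.sum_congr rfl fun l _ => ?_
    rw [← Finset.sum_sub_distrib, Finset.mul_sum]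
    refine Finset.sum_congr rfl fun j _ => ?_
    simp only [hf]
    rw [show j + 1 + l = l + j + 1 by ring, show j + (l + 1) = l + j + 1 by ring]
    ring
  have hz (i j : ℕ) (h : d < i + j) : f i j = 0 := by
    simp [hf, coeff_eq_zero_of_natDegree_lt (hdeg.trans_lt h)]
  have h1 : ∑ l ∈ Finset.range d, f d l = f d 0 :=
    Finset.sum_eq_single_of_mem 0 (Finset.mem_range.2 hd) fun l _ hl => hz _ _ (by omega)
  have h2 : ∑ j ∈ Finset.range d, f j d = f 0 d :=
    Finset.sum_eq_single_of_mem 0 (Finset.mem_range.2 hd) fun l _ hl => hz _ _ (by omega)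
  have hx : aeval x P = ∑ j ∈ Finset.range d, f j 0 + f d 0 := by
    rw [← Finset.sum_range_succ (fun j => f j 0), aeval_eq_sum_range, hdeg]
    simp [hf]
  have hy : aeval y P = ∑ l ∈ Finset.range d, f 0 l + f 0 d := by
    rw [← Finset.sum_range_succ (fun l => f 0 l), aeval_eq_sum_range, hdeg]
    simp [hf]
  have t1 (l : ℕ) : ∑ j ∈ Finset.range d, (f (j + 1) l - f j l) = f d l - f 0 l :=
    Finset.sum_range_sub (fun j => f j l) d
  have t2 (j : ℕ) : ∑ l ∈ Finset.range d, (f j (l + 1) - f j l) = f j d - f j 0 :=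
    Finset.sum_range_sub (f j) d
  rw [key, Finset.sum_congr rfl fun l _ => t1 l, Finset.sum_congr rfl fun j _ => t2 j,
    Finset.sum_sub_distrib, Finset.sum_sub_distrib, h1, h2, hx, hy]
  ring

/-- If `w ≠ 0` is an integer coefficient vector, then `∏ i, ∑ j, w j * ξ i ^ j` is the resultant of
`P` with a nonzero polynomial of smaller degree, so it is a nonzero integer. -/
lemma one_le_abs_prod (d : ℕ) (hd : 1 ≤ d) (P : ℤ[X])
    (hmonic : P.Monic) (hdeg : P.natDegree = d)
    (hirr : Irreducible (P.map (Int.castRingHom ℚ)))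
    (ξ : Fin d → ℝ) (hinj : Function.Injective ξ)
    (hroots : ∀ i, aeval (ξ i) P = 0) (w : Fin d → ℤ) (hw : w ≠ 0) :
    1 ≤ |∏ i, ∑ j : Fin d, ξ i ^ (j : ℕ) * (w j : ℝ)| := by
  set q : ℤ[X] := ofFn d w with hq
  have hq0 : q ≠ 0 := by
    rw [hq, Ne, ← map_zero (ofFn (R := ℤ) d), (injective_ofFn d).eq_iff]
    exact hw
  have hqd : q.natDegree < d := ofFn_natDegree_lt hd w
  have heval (i : Fin d) : ∑ j : Fin d, ξ i ^ (j : ℕ) * (w j : ℝ) = aeval (ξ i) q := by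
    rw [aeval_eq_sum_range' hqd, ← Fin.sum_univ_eq_sum_range
      (fun j => q.coeff j • ξ i ^ j)]
    refine Finset.sum_congr rfl fun j _ => ?_
    simp [hq, ofFn_coeff_eq_val_of_lt, mul_comm]
  have hne (i : Fin d) : aeval (ξ i) q ≠ 0 := by
    intro h
    have hmin : P.map (Int.castRingHom ℚ) = minpoly ℚ (ξ i) := by
      refine minpoly.eq_of_irreducible_of_monic hirr ?_ (hmonic.map _)
      exact (aeval_map_algebraMap ℚ (ξ i) P).trans (hroots i)
    have hle := minpoly.degree_le_of_ne_zero ℚ (ξ i) (p := q.map (Int.castRingHom ℚ))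
      ((Polynomial.map_ne_zero_iff Int.cast_injective).2 hq0)
      ((aeval_map_algebraMap ℚ (ξ i) q).trans h)
    have hle' := natDegree_le_natDegree hle
    rw [← hmin, hmonic.natDegree_map, hdeg] at hle'
    exact absurd (hle'.trans natDegree_map_le) (not_le.2 hqd)
  set PR : ℝ[X] := P.map (Int.castRingHom ℝ) with hPR
  have hPm : PR.Monic := hmonic.map _
  have hPd : PR.natDegree = d := by rw [hPR, hmonic.natDegree_map, hdeg]
  have hPr : PR.roots = Finset.univ.val.map ξ := by
    symm
    apply Multiset.eq_of_le_of_card_le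
    · rw [Multiset.le_iff_subset (Finset.univ.nodup.map hinj)]
      intro x hx
      obtain ⟨i, -, rfl⟩ := Multiset.mem_map.1 hx
      rw [mem_roots hPm.ne_zero, IsRoot, hPR, eval_map]
      exact hroots i
    · simpa [hPd] using PR.card_roots'
  have hsplit : PR.Splits := by
    rw [splits_iff_card_roots, hPr, hPd]
    simp
  have hres := resultant_eq_prod_eval PR (q.map (Int.castRingHom ℝ)) d
    (natDegree_map_le.trans hqd.le) hsplit
  rw [hPm.leadingCoeff, one_pow, one_mul, hPr, Multiset.map_map, hPR, resultant_map_map] at hres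
  have hprod : ∏ i, ∑ j : Fin d, ξ i ^ (j : ℕ) * (w j : ℝ) =
      ((resultant P q (P.map (Int.castRingHom ℝ)).natDegree d : ℤ) : ℝ) := by
    rw [Finset.prod_congr rfl fun i _ => heval i]
    refine Eq.trans ?_ hres.symm
    refine Finset.prod_congr rfl fun i _ => ?_
    simp [aeval_def, eval_map]
  have hne' : ∏ i, ∑ j : Fin d, ξ i ^ (j : ℕ) * (w j : ℝ) ≠ 0 :=
    Finset.prod_ne_zero_iff.2 fun i _ => (heval i).trans_ne (hne i)
  rw [hprod] at hne' ⊢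
  exact_mod_cast Int.one_le_abs (by exact_mod_cast hne')

/-- For an admissible polynomial `P` of degree `d ≥ 1` with distinct real
roots `ξ i` and associated Vandermonde matrix `V i j = ξ i ^ (j : ℕ)`, the inverse
transpose `V⁻ᵀ` satisfies `Nm(V⁻ᵀ) = |det V|⁻²`, i.e. the infimum over nonzero integer
vectors `k` of `|∏ i, (V⁻ᵀ k)_i|` equals `|det V| ^ (-2 : ℤ)`. -/
theorem stmt1 (d : ℕ) (hd : 1 ≤ d) (P : Polynomial ℤ)
    (hmonic : P.Monic) (hdeg : P.natDegree = d)
    (hirr : Irreducible (P.map (Int.castRingHom ℚ)))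
    (ξ : Fin d → ℝ) (hinj : Function.Injective ξ)
    (hroots : ∀ i, Polynomial.aeval (ξ i) P = 0)
    (V : Matrix (Fin d) (Fin d) ℝ) (hV : ∀ i j, V i j = ξ i ^ (j : ℕ)) :
    sInf {x : ℝ | ∃ k : Fin d → ℤ, k ≠ 0 ∧
        x = |∏ i, (V⁻¹)ᵀ.mulVec (fun j => (k j : ℝ)) i|} = |V.det| ^ (-2 : ℤ) := by
  have hVdet : V.det ≠ 0 := by
    rw [show V = vandermonde ξ from Matrix.ext hV]
    exact det_vandermonde_ne_zero_iff.2 hinj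
  set C := coeffHankel d P with hC
  set CR : Matrix (Fin d) (Fin d) ℝ := C.map (Int.castRingHom ℝ) with hCR
  have hCdet := abs_det_coeffHankel d P hmonic hdeg
  have hCRdet : |CR.det| = 1 := by
    rw [hCR, ← RingHom.mapMatrix_apply, ← RingHom.map_det, eq_intCast, ← Int.cast_abs, hC, hCdet,
      Int.cast_one]
  obtain ⟨δ, hδ⟩ : ∃ δ : Fin d → ℝ, V * CR * Vᵀ = diagonal δ := by
    refine ⟨fun i => (V * CR * Vᵀ) i i, ?_⟩
    ext i i'
    by_cases h : i = i'
    · subst h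
      simp
    rw [diagonal_apply_ne _ h]
    have hid := sub_mul_sum_coeff d P hdeg hd (ξ i') (ξ i)
    rw [hroots, hroots, sub_zero] at hid
    have hid' := (mul_eq_zero.1 hid).resolve_left (sub_ne_zero.2 fun e => h (hinj e).symm)
    rw [Finset.sum_comm] at hid'
    rw [← hid', Matrix.mul_apply, ← Fin.sum_univ_eq_sum_range (fun j =>
      ∑ l ∈ Finset.range d, (P.coeff (l + j + 1) : ℝ) * ξ i ^ l * ξ i' ^ j)]
    refine Finset.sum_congr rfl fun j _ => ?_
    rw [Matrix.mul_apply, Finset.sum_mul, ← Fin.sum_univ_eq_sum_range (fun l =>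
      (P.coeff (l + j + 1) : ℝ) * ξ i ^ l * ξ i' ^ (j : ℕ))]
    refine Finset.sum_congr rfl fun l _ => ?_
    simp only [hCR, hC, coeffHankel, hV, Matrix.map_apply, Matrix.of_apply,
      Matrix.transpose_apply, eq_intCast]
    ring
  have hδprod : |∏ i, δ i| = |V.det| ^ 2 := by
    rw [← det_diagonal, ← hδ, det_mul, det_mul, det_transpose, abs_mul, abs_mul, hCRdet]
    ring
  have hpos : 0 < |V.det| ^ 2 := by positivity
  have hmain (k : Fin d → ℤ) : |∏ i, (V⁻¹)ᵀ.mulVec (fun j => (k j : ℝ)) i| =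
      |∏ i, ∑ j : Fin d, ξ i ^ (j : ℕ) * ((C *ᵥ k) j : ℝ)| * |V.det| ^ (-2 : ℤ) := by
    have hvec : diagonal δ *ᵥ ((V⁻¹)ᵀ *ᵥ fun j => (k j : ℝ)) = V *ᵥ (CR *ᵥ fun j => (k j : ℝ)) := by
      rw [← hδ, mulVec_mulVec, mulVec_mulVec, Matrix.mul_assoc, ← transpose_mul,
        Matrix.nonsing_inv_mul _ hVdet.isUnit, transpose_one, Matrix.mul_one]
    have hi (i : Fin d) : ∑ j : Fin d, ξ i ^ (j : ℕ) * ((C *ᵥ k) j : ℝ) =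
        δ i * ((V⁻¹)ᵀ *ᵥ fun j => (k j : ℝ)) i := by
      rw [← mulVec_diagonal, hvec]
      refine Finset.sum_congr rfl fun j _ => ?_
      simp [hV, hCR, mulVec, dotProduct]
    rw [Finset.prod_congr rfl fun i _ => hi i, Finset.prod_mul_distrib, abs_mul, hδprod,
      _root_.zpow_neg]
    norm_cast
    field_simp
  have hCinj (k : Fin d → ℤ) (hk : k ≠ 0) : C *ᵥ k ≠ 0 := fun h =>
    hk (Matrix.eq_zero_of_mulVec_eq_zero (by
      intro h0
      rw [← hC, h0] at hCdet
      simp at hCdet) h)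
  refine IsLeast.csInf_eq ⟨?_, ?_⟩
  · -- For `k = e_{d-1}` the polynomial with coefficient vector `C k` is the constant `1`.
    refine ⟨Pi.single ⟨d - 1, by omega⟩ 1, by simp, ?_⟩
    have hone (i : Fin d) : ∑ j : Fin d, ξ i ^ (j : ℕ) *
        ((C *ᵥ Pi.single ⟨d - 1, by omega⟩ 1) j : ℝ) = 1 := by
      rw [Finset.sum_eq_single_of_mem ⟨0, hd⟩ (Finset.mem_univ _)]
      · have h : d - 1 + 1 = P.natDegree := by omega
        simp [hC, coeffHankel, h, hmonic.coeff_natDegree]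
      · intro j _ hj
        have hj' : (j : ℕ) ≠ 0 := fun e => hj (Fin.ext e)
        have h : P.natDegree < j + (d - 1) + 1 := by omega
        simp [hC, coeffHankel, coeff_eq_zero_of_natDegree_lt h]
    rw [hmain, Finset.prod_congr rfl fun i _ => hone i]
    simp
  · rintro x ⟨k, hk, rfl⟩
    rw [hmain]
    exact le_mul_of_one_le_left (by positivity)
      (one_le_abs_prod d hd P hmonic hdeg hirr ξ hinj hroots _ (hCinj k hk))
end

section
/- The polynomial P_7(x) = x^7 + x^6 − 6x^5 − 4x^4 + 10x^3 + 4x^2 − 4x − 1, viewed as a polynomial with rational coefficients, is irreducible over ℚ. -/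
/-!
The polynomial is monic with integer coefficients, so by Gauss's lemma it is enough that its
reduction modulo 2, the trinomial `X ^ 7 + X ^ 6 + 1`, is irreducible over `𝔽₂`. If it were not, it
would have an irreducible factor of degree `d ≤ 3`, hence a root `α` in a field with `2 ^ d`
elements. Such a root is nonzero and satisfies `α ^ (2 ^ d - 1) = 1`, and for each `d ∈ {1, 2, 3}`
this contradicts `α ^ 7 + α ^ 6 + 1 = 0`.
-/

open Polynomial

/-- A root `a` would be nonzero, so its order would divide `2 ^ d - 1`, which is `1`, `3` or `7`. -/
lemma no_root_of_pow_eq_self {K : Type*} [Field K] [CharP K 2] (a : K) (d : ℕ) (hd : 0 < d)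
    (hd3 : d ≤ 3) (ha : a ^ 2 ^ d = a) : a ^ 7 + a ^ 6 + 1 ≠ 0 := by
  intro h
  have h2 : (2 : K) = 0 := CharTwo.two_eq_zero
  have h0 : a ≠ 0 := by
    rintro rfl
    simp at h
  interval_cases d
  · have h1 : a = 1 := mul_left_cancel₀ h0 (by linear_combination ha)
    subst h1
    exact one_ne_zero (α := K) (by linear_combination h - h2)
  · have h1 : a ^ 3 = 1 := mul_left_cancel₀ h0 (by linear_combination ha)
    exact h0 (by linear_combination h - (a ^ 4 + a + a ^ 3 + 1) * h1 - h2)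
  · have h1 : a ^ 7 = 1 := mul_left_cancel₀ h0 (by linear_combination ha)
    exact pow_ne_zero 6 h0 (by linear_combination h - h1 - h2)

lemma irreducible_mod_two : Irreducible (X ^ 7 + X ^ 6 + 1 : (ZMod 2)[X]) := by
  have hdeg : (X ^ 7 + X ^ 6 + 1 : (ZMod 2)[X]).natDegree = 7 := by compute_degree!
  have hmon : (X ^ 7 + X ^ 6 + 1 : (ZMod 2)[X]).Monic := by monicity!
  have hne : (X ^ 7 + X ^ 6 + 1 : (ZMod 2)[X]) ≠ 1 := by
    intro h
    rw [h, natDegree_one] at hdeg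
    omega
  rw [hmon.irreducible_iff_lt_natDegree_lt hne]
  intro g hg hgd hdvd
  rw [hdeg, Finset.mem_Ioc] at hgd
  obtain ⟨q, hq, hqg⟩ := exists_irreducible_of_natDegree_pos hgd.1
  have hqd : q.natDegree ≤ 3 := (natDegree_le_of_dvd hqg hg.ne_zero).trans hgd.2
  have : Fact (Irreducible q) := ⟨hq⟩
  let pb := AdjoinRoot.powerBasis hq.ne_zero
  have : Module.Finite (ZMod 2) (AdjoinRoot q) := pb.finite
  have : Finite (AdjoinRoot q) := Module.finite_of_finite (ZMod 2)
  have : Fintype (AdjoinRoot q) := Fintype.ofFinite _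
  have : CharP (AdjoinRoot q) 2 := charP_of_injective_algebraMap' (ZMod 2) 2
  have hcard : Fintype.card (AdjoinRoot q) = 2 ^ q.natDegree := by
    rw [Module.card_eq_pow_finrank (K := ZMod 2), ZMod.card, pb.finrank,
      AdjoinRoot.powerBasis_dim]
  refine no_root_of_pow_eq_self (AdjoinRoot.root q) q.natDegree hq.natDegree_pos hqd
    (by rw [← hcard, FiniteField.pow_card]) ?_
  have h := AdjoinRoot.mk_eq_zero.2 (hqg.trans hdvd)
  simpa using h

theorem int_irreducible :
    Irreducible (X ^ 7 + X ^ 6 - 6 * X ^ 5 - 4 * X ^ 4 + 10 * X ^ 3 + 4 * X ^ 2 -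
      4 * X - 1 : ℤ[X]) := by
  refine Monic.irreducible_of_irreducible_map (Int.castRingHom (ZMod 2)) _ (by monicity!) ?_
  convert irreducible_mod_two using 1
  have h2 : (2 : (ZMod 2)[X]) = 0 := CharTwo.two_eq_zero
  simp only [Polynomial.map_sub, Polynomial.map_add, Polynomial.map_mul, Polynomial.map_pow,
    map_X, Polynomial.map_one, Polynomial.map_ofNat]
  linear_combination (-3 * X ^ 5 - 2 * X ^ 4 + 5 * X ^ 3 + 2 * X ^ 2 - 2 * X - 1) * h2

/-- The polynomial
`P₇(x) = x⁷ + x⁶ − 6x⁵ − 4x⁴ + 10x³ + 4x² − 4x − 1` is irreducible over `ℚ`. -/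
theorem stmt6 :
    Irreducible (Polynomial.X ^ 7 + Polynomial.X ^ 6 - 6 * Polynomial.X ^ 5 -
      4 * Polynomial.X ^ 4 + 10 * Polynomial.X ^ 3 + 4 * Polynomial.X ^ 2 -
      4 * Polynomial.X - 1 : Polynomial ℚ) := by
  have hmon : (X ^ 7 + X ^ 6 - 6 * X ^ 5 - 4 * X ^ 4 + 10 * X ^ 3 + 4 * X ^ 2 -
      4 * X - 1 : ℤ[X]).Monic := by monicity!
  have h := (hmon.irreducible_iff_irreducible_map_fraction_map (K := ℚ)).1 int_irreducible
  simpa using h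
end

section
/- Let r ≥ 1 be an integer and x, y ∈ [0,1]. Then the kernel K^r_1(x,y) := ∫_0^{min{x,y}} (x−t)^{r−1}/(r−1)! · (y−t)^{r−1}/(r−1)! dt admits the explicit formula K^r_1(x,y) = (−1)^r/(2r−1)! · ∑_{k=r}^{2r−1} C(2r−1, k) · (−min{x,y})^k · (max{x,y})^{2r−1−k}, where C(n,k) denotes the binomial coefficient. -/
/-!
The idea is repeated integration by parts. Write `p ^ [n]` for the divided power `p ^ n / n!` and
put `m = min x y`, `M = max x y`. Since `(m - t) ^ [a + 1]` vanishes at `t = m`, moving one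
derivative from the factor in `M` to the factor in `m` gives
`∫₀ᵐ (m - t) ^ [a] (M - t) ^ [b + 1] = m ^ [a + 1] M ^ [b + 1] - ∫₀ᵐ (m - t) ^ [a + 1] (M - t) ^ [b]`.
Iterating until the factor in `M` is constant yields the alternating sum in
`integral_divPow_mul_divPow`. At `a = b = r - 1` its `j`-th term is the `k = r + j` term of the
claim, because `C(2r-1, k) / (2r-1)! = 1 / (k! (2r-1-k)!)`. The two orderings
of `x` and `y` differ only by commuting the two factors of the integrand.
-/

open intervalIntegral

/-- `t ↦ (c - t) ^ (n + 1) / (n + 1)!` has derivative `-(c - t) ^ n / n!`. -/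
lemma hasDerivAt_divPow (c t : ℝ) (n : ℕ) :
    HasDerivAt (fun t : ℝ => (c - t) ^ (n + 1) / ((n + 1).factorial : ℝ))
      (-((c - t) ^ n / (n.factorial : ℝ))) t := by
  have h := (((hasDerivAt_id t).const_sub c).pow (n + 1)).div_const ((n + 1).factorial : ℝ)
  have h0 : (n.factorial : ℝ) ≠ 0 := by positivity
  have h1 : ((n : ℝ) + 1) ≠ 0 := by positivity
  refine h.congr_deriv ?_
  simp only [Nat.factorial_succ, id, Nat.add_sub_cancel]
  push_cast
  field_simp

/-- One integration by parts; the boundary term at `t = m` vanishes. -/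
lemma integral_divPow_step (m M : ℝ) (a b : ℕ) :
    (∫ t in (0 : ℝ)..m, (m - t) ^ a / (a.factorial : ℝ) *
        ((M - t) ^ (b + 1) / ((b + 1).factorial : ℝ))) =
      m ^ (a + 1) / ((a + 1).factorial : ℝ) * (M ^ (b + 1) / ((b + 1).factorial : ℝ)) -
        ∫ t in (0 : ℝ)..m, (m - t) ^ (a + 1) / ((a + 1).factorial : ℝ) *
          ((M - t) ^ b / (b.factorial : ℝ)) := by
  have h := integral_deriv_mul_eq_sub (a := 0) (b := m)
    (fun t _ => hasDerivAt_divPow m t a) (fun t _ => hasDerivAt_divPow M t b)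
    (Continuous.intervalIntegrable (by fun_prop) _ _)
    (Continuous.intervalIntegrable (by fun_prop) _ _)
  rw [integral_add (Continuous.intervalIntegrable (by fun_prop) _ _)
    (Continuous.intervalIntegrable (by fun_prop) _ _)] at h
  simp only [neg_mul, mul_neg, integral_neg, sub_self, sub_zero, ne_eq, Nat.succ_ne_zero,
    not_false_eq_true, zero_pow, zero_div, zero_mul, zero_sub] at h
  linarith

/-- The integration by parts formula iterated until the second factor is constant. -/
lemma integral_divPow_mul_divPow (m M : ℝ) (b : ℕ) : ∀ a : ℕ,
    (∫ t in (0 : ℝ)..m, (m - t) ^ a / (a.factorial : ℝ) *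
        ((M - t) ^ b / (b.factorial : ℝ))) =
      ∑ j ∈ Finset.range (b + 1), (-1 : ℝ) ^ j *
        (m ^ (a + 1 + j) / ((a + 1 + j).factorial : ℝ) *
          (M ^ (b - j) / ((b - j).factorial : ℝ))) := by
  induction b with
  | zero =>
    intro a
    have h := integral_eq_sub_of_hasDerivAt (a := 0) (b := m)
      (fun t _ => hasDerivAt_divPow m t a)
      (Continuous.intervalIntegrable (by fun_prop) _ _)
    simp only [integral_neg, sub_self, sub_zero, ne_eq, Nat.succ_ne_zero,
      not_false_eq_true, zero_pow, zero_div, zero_sub, neg_inj] at h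
    simpa using h
  | succ b ih =>
    intro a
    rw [integral_divPow_step, ih (a + 1), Finset.sum_range_succ' _ (b + 1), sub_eq_add_neg,
      add_comm, ← Finset.sum_neg_distrib]
    congr 1
    · refine Finset.sum_congr rfl fun j _ => ?_
      rw [show a + 1 + (j + 1) = a + 1 + 1 + j by ring, Nat.add_sub_add_right]
      ring
    · simp

/-- The claim with the smaller argument `m` and the larger argument `M` as independent
variables. -/
lemma integral_kernel (r : ℕ) (hr : 1 ≤ r) (m M : ℝ) :
    (∫ t in (0 : ℝ)..m, (m - t) ^ (r - 1) / ((r - 1).factorial : ℝ) *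
        ((M - t) ^ (r - 1) / ((r - 1).factorial : ℝ))) =
      (-1 : ℝ) ^ r / ((2 * r - 1).factorial : ℝ) *
        ∑ k ∈ Finset.Icc r (2 * r - 1),
          ((2 * r - 1).choose k : ℝ) * (-m) ^ k * M ^ (2 * r - 1 - k) := by
  obtain ⟨s, rfl⟩ : ∃ s, r = s + 1 := ⟨r - 1, by omega⟩
  rw [show 2 * (s + 1) - 1 = 2 * s + 1 by omega, Nat.add_sub_cancel, integral_divPow_mul_divPow,
    Finset.mul_sum, ← Finset.Ico_succ_right_eq_Icc, Finset.sum_Ico_eq_sum_range]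
  rw [show Order.succ (2 * s + 1) - (s + 1) = s + 1 by simp only [Nat.succ_eq_succ]; omega]
  refine Finset.sum_congr rfl fun j hj => ?_
  have hj' : j ≤ s := by simpa [Nat.lt_succ_iff] using hj
  rw [show 2 * s + 1 - (s + 1 + j) = s - j by omega,
    Nat.cast_choose ℝ (show s + 1 + j ≤ 2 * s + 1 by omega),
    show 2 * s + 1 - (s + 1 + j) = s - j by omega, neg_pow m]
  have hN : ((2 * s + 1).factorial : ℝ) ≠ 0 := by positivity
  have hsign : (-1 : ℝ) ^ (s + 1) * (-1) ^ (s + 1 + j) = (-1) ^ j := by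
    rw [pow_add _ (s + 1) j, ← mul_assoc, ← mul_pow]
    simp
  rw [← hsign]
  field_simp

/-- For an integer `r ≥ 1` and `x, y ∈ [0,1]`, the kernel
`K¹ᵣ(x,y) = ∫_0^{min x y} (x−t)^{r−1}/(r−1)! · (y−t)^{r−1}/(r−1)! dt` equals
`(−1)^r/(2r−1)! ∑_{k=r}^{2r−1} C(2r−1,k) (−min x y)^k (max x y)^{2r−1−k}`. -/
theorem stmt10 (r : ℕ) (hr : 1 ≤ r) (x y : ℝ)
    (hx : x ∈ Set.Icc (0 : ℝ) 1) (hy : y ∈ Set.Icc (0 : ℝ) 1) :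
    (∫ t in (0 : ℝ)..(min x y),
        (x - t) ^ (r - 1) / ((r - 1).factorial : ℝ) *
          ((y - t) ^ (r - 1) / ((r - 1).factorial : ℝ))) =
      (-1 : ℝ) ^ r / ((2 * r - 1).factorial : ℝ) *
        ∑ k ∈ Finset.Icc r (2 * r - 1),
          ((2 * r - 1).choose k : ℝ) * (-(min x y)) ^ k * (max x y) ^ (2 * r - 1 - k) := by
  rcases le_total x y with h | h
  · rw [min_eq_left h, max_eq_right h]
    exact integral_kernel r hr x y
  · rw [min_eq_right h, max_eq_left h, ← integral_kernel r hr y x]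
    exact integral_congr fun t _ => mul_comm _ _
end

section
/- Let r ≥ 1 be an integer, let 0 ≤ j ≤ r−1 be an integer, and let x ∈ [0,1]. Then ∫_0^x (x−t)^{r−1}/(r−1)! · (1−t)^{r−1−j}/(r−1−j)! dt = (−1)^r/(2r−1−j)! · ∑_{k=r}^{2r−1−j} C(2r−1−j, k) · (−x)^k, where C(n,k) denotes the binomial coefficient. -/
/-!
The integral is the remainder term in Taylor's formula at `0` for `x ↦ (1 - x) ^ n`, `n = p + m + 1`,
truncated after degree `p`, up to the constant `(-1) ^ (p + 1) / n !`. As for Taylor's formula, the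
identity follows by induction on `p` (with `m` varying so as to keep `n` fixed): integrating by parts
trades one factor `x - t` for one factor `1 - t`, and the boundary term at `t = 0` is the monomial of
degree `p` in the binomial expansion. The base case is the binomial theorem.
-/

open intervalIntegral

lemma hasDerivAt_sub_pow_div_factorial (a t : ℝ) (n : ℕ) :
    HasDerivAt (fun t : ℝ => (a - t) ^ (n + 1) / ((n + 1).factorial : ℝ))
      (-((a - t) ^ n / (n.factorial : ℝ))) t := by
  have h := ((((hasDerivAt_id t).const_sub a).pow (n + 1)).div_const ((n + 1).factorial : ℝ))
  refine h.congr_deriv ?_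
  have : (n.factorial : ℝ) ≠ 0 := by positivity
  rw [Nat.factorial_succ]
  push_cast
  simp only [id]
  field_simp

/-- The Taylor remainder of `(1 - x) ^ (p + m + 1)`, divided by `(-1) ^ (p + 1) * (p + m + 1)!`. The
exponents `p` and `m` are independent, so that the induction on `p` can shift `m`. -/
lemma integral_sub_pow_mul_one_sub_pow (x : ℝ) (p m : ℕ) :
    (∫ t in (0 : ℝ)..x, (x - t) ^ p / (p.factorial : ℝ) * ((1 - t) ^ m / (m.factorial : ℝ))) =
      (-1 : ℝ) ^ (p + 1) / ((p + m + 1).factorial : ℝ) *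
        ∑ k ∈ Finset.Ico (p + 1) (p + m + 2), ((p + m + 1).choose k : ℝ) * (-x) ^ k := by
  induction p generalizing m with
  | zero =>
    have hF : ∀ t ∈ Set.uIcc 0 x, HasDerivAt
        (fun t : ℝ => -((1 - t) ^ (m + 1) / ((m + 1).factorial : ℝ)))
        ((x - t) ^ 0 / (Nat.factorial 0 : ℝ) * ((1 - t) ^ m / (m.factorial : ℝ))) t := by
      intro t _
      simpa using (hasDerivAt_sub_pow_div_factorial 1 t m).fun_neg
    rw [integral_eq_sub_of_hasDerivAt hF (Continuous.intervalIntegrable (by fun_prop) _ _)]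
    have hb : (1 - x) ^ (m + 1) =
        1 + ∑ k ∈ Finset.Ico 1 (m + 2), ((m + 1).choose k : ℝ) * (-x) ^ k := by
      have h := add_pow (-x) 1 (m + 1)
      rw [Finset.range_eq_Ico, Finset.sum_eq_sum_Ico_succ_bot (by omega)] at h
      rw [show 1 - x = -x + 1 by ring, h]
      simp [mul_comm]
    simp only [zero_add, hb]
    simp
    ring
  | succ p ih =>
    have hparts := integral_mul_deriv_eq_deriv_mul (a := 0) (b := x)
      (fun t _ => hasDerivAt_sub_pow_div_factorial x t p)
      (fun t _ => (hasDerivAt_sub_pow_div_factorial 1 t m).fun_neg)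
      (Continuous.intervalIntegrable (by fun_prop) _ _)
      (Continuous.intervalIntegrable (by fun_prop) _ _)
    simp only [neg_neg, neg_mul_neg] at hparts
    rw [hparts, ih (m + 1), show p + (m + 1) + 1 = p + 1 + m + 1 by ring,
      show p + (m + 1) + 2 = p + 1 + m + 2 by ring,
      Finset.sum_eq_sum_Ico_succ_bot (show p + 1 < p + 1 + m + 2 by omega)]
    have hc : (((p + 1 + m + 1).choose (p + 1) : ℕ) : ℝ) =
        ((p + 1 + m + 1).factorial : ℝ) / ((p + 1).factorial * (m + 1).factorial) := by
      rw [add_assoc (p + 1), Nat.cast_add_choose]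
    have h1 : ((p + 1 + m + 1).factorial : ℝ) ≠ 0 := by positivity
    have hs : (-1 : ℝ) ^ (p + 1) * (-x) ^ (p + 1) = x ^ (p + 1) := by
      rw [← mul_pow]; simp
    -- The lowest term of the sum cancels the boundary term at `t = 0`.
    have hbd : (-1 : ℝ) ^ (p + 1) / ((p + 1 + m + 1).factorial : ℝ) *
        (((p + 1 + m + 1).choose (p + 1) : ℝ) * (-x) ^ (p + 1)) =
        x ^ (p + 1) / ((p + 1).factorial : ℝ) * (1 / ((m + 1).factorial : ℝ)) := by
      rw [hc, ← hs]
      field_simp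
    rw [mul_add, hbd]
    simp
    ring

/-- For integers `r ≥ 1`, `0 ≤ j ≤ r−1`, and `x ∈ [0,1]`:
`∫_0^x (x−t)^{r−1}/(r−1)! · (1−t)^{r−1−j}/(r−1−j)! dt
  = (−1)^r/(2r−1−j)! ∑_{k=r}^{2r−1−j} C(2r−1−j,k) (−x)^k`. -/
theorem stmt11 (r j : ℕ) (hr : 1 ≤ r) (hj : j ≤ r - 1) (x : ℝ)
    (hx : x ∈ Set.Icc (0 : ℝ) 1) :
    (∫ t in (0 : ℝ)..x,
        (x - t) ^ (r - 1) / ((r - 1).factorial : ℝ) *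
          ((1 - t) ^ (r - 1 - j) / ((r - 1 - j).factorial : ℝ))) =
      (-1 : ℝ) ^ r / ((2 * r - 1 - j).factorial : ℝ) *
        ∑ k ∈ Finset.Icc r (2 * r - 1 - j), ((2 * r - 1 - j).choose k : ℝ) * (-x) ^ k := by
  obtain ⟨p, rfl⟩ : ∃ p, r = p + 1 := ⟨r - 1, by omega⟩
  have h := integral_sub_pow_mul_one_sub_pow x p (p - j)
  have e : 2 * (p + 1) - 1 - j = p + (p - j) + 1 := by omega
  rw [e, Nat.add_sub_cancel, h]
  rfl
end

section
/- Let T be a real invertible d×d matrix with Nm(T) := inf_{k∈ℤ^d∖{0}} |∏_{i=1}^d (Tk)_i| > 0, and let Ω ⊂ ℝ^d be an axis-parallel box (a product of d bounded intervals). Then the number of lattice points of T(ℤ^d) in Ω satisfies #(T(ℤ^d) ∩ Ω) ≤ vol_d(Ω)/Nm(T) + 1, where vol_d denotes d-dimensional Lebesgue measure. -/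
open Matrix MeasureTheory

/-!
If `x ≠ y` are lattice points in the box, then `x - y` is a nonzero lattice point, so
`Nm ≤ ∏ i, |x i - y i|`. In each coordinate `|x i - y i| ≤ vol (I i)`, so the first
coordinates of distinct lattice points in the box are separated by at least
`δ = Nm / ∏ i ≥ 1, vol (I i)`. Reals that are `δ`-separated and lie in an interval of length
`vol (I 0)` are at most `vol (I 0) / δ + 1 = vol Ω / Nm + 1` in number.
-/

/-- Two points of a bounded order-connected set are at most its length apart. -/
lemma abs_sub_le_volume {J : Set ℝ} (hb : Bornology.IsBounded J) (hc : J.OrdConnected)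
    {x y : ℝ} (hx : x ∈ J) (hy : y ∈ J) : |x - y| ≤ (volume J).toReal := by
  have h := ENNReal.toReal_mono hb.measure_lt_top.ne
    (measure_mono (μ := volume) (hc.uIcc_subset hy hx))
  rwa [Real.volume_interval, ENNReal.toReal_ofReal (abs_nonneg _)] at h

/-- Packing bound: if `f` sends distinct points of `S` to reals at least `δ` apart, all in
an interval `[a, a + L]`, then `S` is finite with at most `L / δ + 1` elements. -/
lemma finite_ncard_le_of_separated {α : Type*} (S : Set α) (f : α → ℝ) {a L δ : ℝ}
    (hδ : 0 < δ) (hL : 0 ≤ L) (hlo : ∀ x ∈ S, a ≤ f x) (hhi : ∀ x ∈ S, f x ≤ a + L)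
    (hsep : ∀ x ∈ S, ∀ y ∈ S, x ≠ y → δ ≤ |f x - f y|) :
    S.Finite ∧ (S.ncard : ℝ) ≤ L / δ + 1 := by
  -- Separation makes `x ↦ ⌊(f x - a) / δ⌋` injective on `S`.
  have hinj : Set.InjOn (fun x => ⌊(f x - a) / δ⌋) S := by
    intro x hx y hy hxy
    by_contra hne
    have h1 := Int.abs_sub_lt_one_of_floor_eq_floor hxy
    rw [← sub_div, abs_div, abs_of_pos hδ, div_lt_one hδ] at h1
    have h2 := hsep x hx y hy hne
    have h3 : f x - a - (f y - a) = f x - f y := by ring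
    rw [h3] at h1
    linarith
  have hmaps : Set.MapsTo (fun x => ⌊(f x - a) / δ⌋) S
      ((Finset.Icc 0 ⌊L / δ⌋ : Finset ℤ) : Set ℤ) := by
    intro x hx
    rw [Finset.mem_coe, Finset.mem_Icc]
    refine ⟨Int.floor_nonneg.2 (div_nonneg (by linarith [hlo x hx]) hδ.le),
      Int.floor_le_floor (div_le_div_of_nonneg_right (by linarith [hhi x hx]) hδ.le)⟩
  refine ⟨Set.Finite.of_injOn hmaps hinj (Finset.finite_toSet _), ?_⟩
  have hcard := Set.ncard_le_ncard_of_injOn _ hmaps hinj (Finset.finite_toSet _)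
  rw [Set.ncard_coe_finset, Int.card_Icc, sub_zero] at hcard
  have h0 : 0 ≤ ⌊L / δ⌋ := Int.floor_nonneg.2 (div_nonneg hL hδ.le)
  have hcard' : (S.ncard : ℤ) ≤ ⌊L / δ⌋ + 1 := by omega
  have hcast : (S.ncard : ℝ) ≤ (⌊L / δ⌋ : ℝ) + 1 := by exact_mod_cast hcard'
  linarith [Int.floor_le (L / δ)]

/-- Let `T` be an invertible real `d×d` matrix with
`Nm(T) = inf_{k∈ℤ^d∖{0}} |∏ i, (Tk)_i| > 0`, and let `Ω` be an axis-parallel box,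
i.e. a product of `d` bounded intervals (bounded order-connected subsets of `ℝ`).
Then the set of lattice points of `T(ℤ^d)` in `Ω` is finite and its cardinality is at
most `vol(Ω)/Nm(T) + 1`. -/
theorem stmt14 (d : ℕ) (T : Matrix (Fin d) (Fin d) ℝ) (hT : IsUnit T.det)
    (I : Fin d → Set ℝ)
    (hIb : ∀ i, Bornology.IsBounded (I i)) (hIc : ∀ i, (I i).OrdConnected)
    (Nm : ℝ)
    (hNm : Nm = sInf {x : ℝ | ∃ k : Fin d → ℤ, k ≠ 0 ∧
        x = |∏ i, T.mulVec (fun j => (k j : ℝ)) i|})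
    (hNmpos : 0 < Nm) :
    {x : Fin d → ℝ | (∃ k : Fin d → ℤ, x = T.mulVec fun j => (k j : ℝ)) ∧
        x ∈ Set.pi Set.univ I}.Finite ∧
    (({x : Fin d → ℝ | (∃ k : Fin d → ℤ, x = T.mulVec fun j => (k j : ℝ)) ∧
        x ∈ Set.pi Set.univ I}.ncard : ℝ)) ≤
      (volume (Set.pi Set.univ I)).toReal / Nm + 1 := by
  set S := {x : Fin d → ℝ | (∃ k : Fin d → ℤ, x = T.mulVec fun j => (k j : ℝ)) ∧
        x ∈ Set.pi Set.univ I} with hS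
  have hvol : (volume (Set.pi Set.univ I)).toReal = ∏ i, (volume (I i)).toReal := by
    rw [volume_pi_pi, ENNReal.toReal_prod]
  rw [hvol]
  have hgap : ∀ x ∈ S, ∀ y ∈ S, x ≠ y → Nm ≤ ∏ i, |x i - y i| := by
    rintro x ⟨⟨k, hk⟩, -⟩ y ⟨⟨l, hl⟩, -⟩ hne
    rw [hNm]
    refine csInf_le ⟨0, ?_⟩ ⟨k - l, ?_, ?_⟩
    · rintro _ ⟨m, -, rfl⟩
      exact abs_nonneg _
    · intro h
      exact hne (by rw [hk, hl, sub_eq_zero.1 h])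
    · have hsub : (fun j => ((k - l) j : ℝ)) = (fun j => (k j : ℝ)) - fun j => (l j : ℝ) := by
        ext j
        simp
      rw [hsub, Matrix.mulVec_sub, ← hk, ← hl, Finset.abs_prod]
      rfl
  have hlen : ∀ x ∈ S, ∀ y ∈ S, ∀ i, |x i - y i| ≤ (volume (I i)).toReal :=
    fun x hx y hy i => abs_sub_le_volume (hIb i) (hIc i) (hx.2 i trivial) (hy.2 i trivial)
  -- With at most one lattice point the bound is trivial; otherwise every side has positive length.
  by_cases hsub : S.Subsingleton
  · refine ⟨hsub.finite, ?_⟩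
    have h1 : (S.ncard : ℝ) ≤ 1 := by
      exact_mod_cast (@Set.ncard_le_one_iff_subsingleton _ S hsub.finite.to_subtype).2 hsub
    have h2 : 0 ≤ (∏ i, (volume (I i)).toReal) / Nm :=
      div_nonneg (Finset.prod_nonneg fun _ _ => ENNReal.toReal_nonneg) hNmpos.le
    linarith
  obtain ⟨p, hp, q, hq, hpq⟩ := Set.not_subsingleton_iff.1 hsub
  have hprod : 0 < ∏ i, (volume (I i)).toReal :=
    hNmpos.trans_le ((hgap p hp q hq hpq).trans
      (Finset.prod_le_prod (fun _ _ => abs_nonneg _) fun i _ => hlen p hp q hq i))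
  cases d with
  | zero => exact absurd (Subsingleton.elim p q) hpq
  | succ n =>
    rw [Fin.prod_univ_succ] at hprod ⊢
    set L := (volume (I 0)).toReal
    set P := ∏ i : Fin n, (volume (I i.succ)).toReal
    have hL : 0 ≤ L := ENNReal.toReal_nonneg
    have hP : 0 < P := pos_of_mul_pos_right hprod hL
    have hbd : ∀ x ∈ S, x 0 ∈ I 0 := fun x hx => hx.2 0 trivial
    rw [show L * P / Nm = L / (Nm / P) by rw [div_div_eq_mul_div]]
    refine finite_ncard_le_of_separated S (fun x => x 0) (a := sInf (I 0)) (div_pos hNmpos hP) hL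
      (fun x hx => csInf_le (hIb 0).bddBelow (hbd x hx)) (fun x hx => ?_) ?_
    · have : x 0 - L ≤ sInf (I 0) := by
        refine le_csInf ⟨_, hbd x hx⟩ fun y hy => ?_
        linarith [(le_abs_self _).trans (abs_sub_le_volume (hIb 0) (hIc 0) (hbd x hx) hy)]
      linarith
    · intro x hx y hy hne
      have h := hgap x hx y hy hne
      rw [Fin.prod_univ_succ] at h
      rw [div_le_iff₀ hP]
      exact h.trans (mul_le_mul_of_nonneg_left
        (Finset.prod_le_prod (fun _ _ => abs_nonneg _) fun i _ => hlen x hx y hy i.succ)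
        (abs_nonneg _))
end

section
/- Let η ≥ 1, r ≥ 1 and R ≥ 0 be integers. Then ∑_{ℓ=R}^∞ C(η−1+ℓ, η−1) · 2^{ℓ − R − 2rℓ} ≤ 2^{−2rR} · (1+R)^{η−1} · (1 − 2^{1−2r})^{−η}, where C(n,k) denotes the binomial coefficient. -/
/-!
Shifting the index by `ℓ = R + m` turns the exponent into `-2rR + (1 - 2r) m`. The ratio of
`C(R + m + k, k)` to `C(m + k, k)` is `∏_{i=1}^{k} (R + m + i) / (m + i)`, each factor of which is at
most `1 + R` (`choose_shift_le`, with `k = η - 1`). Hence the series is bounded termwise by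
`2^{-2rR} (1 + R)^k` times the negative binomial series `∑_m C(m + k, k) x^m = (1 - x)^{-(k + 1)}` at
`x = 2^{1 - 2r} < 1`.
-/

/-- Shifting the upper index of `C(m + k, k)` by `R` costs at most a factor `1 + R` for each of the
`k` factors of the binomial coefficient. -/
theorem choose_shift_le (R m k : ℕ) :
    (R + m + k).choose k ≤ (1 + R) ^ k * (m + k).choose k := by
  induction k with
  | zero => simp
  | succ k ih =>
    have h1 := Nat.add_one_mul_choose_eq (R + m + k) k
    have h2 := Nat.add_one_mul_choose_eq (m + k) k
    refine Nat.le_of_mul_le_mul_right ?_ (Nat.succ_pos k)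
    have h3 : R + m + k + 1 ≤ (1 + R) * (m + k + 1) := by nlinarith [Nat.zero_le (R * (m + k))]
    calc (R + m + (k + 1)).choose (k + 1) * (k + 1)
        = (R + m + k + 1) * (R + m + k).choose k := h1.symm
      _ ≤ ((1 + R) * (m + k + 1)) * ((1 + R) ^ k * (m + k).choose k) := Nat.mul_le_mul h3 ih
      _ = (1 + R) ^ (k + 1) * ((m + k + 1) * (m + k).choose k) := by ring
      _ = (1 + R) ^ (k + 1) * (m + (k + 1)).choose (k + 1) * (k + 1) := by
        rw [h2, ← mul_assoc]; rfl

/-- For integers `η ≥ 1`, `r ≥ 1`, `R ≥ 0`: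
`∑_{ℓ=R}^∞ C(η−1+ℓ, η−1) 2^{ℓ−R−2rℓ} ≤ 2^{−2rR} (1+R)^{η−1} (1−2^{1−2r})^{−η}`. -/
theorem stmt17 (η r R : ℕ) (hη : 1 ≤ η) (hr : 1 ≤ r) :
    (∑' ℓ : {ℓ : ℕ // R ≤ ℓ},
        ((η - 1 + (ℓ : ℕ)).choose (η - 1) : ℝ) *
          (2 : ℝ) ^ (((ℓ : ℕ) : ℤ) - (R : ℤ) - 2 * (r : ℤ) * ((ℓ : ℕ) : ℤ))) ≤
      (2 : ℝ) ^ (-(2 * (r : ℤ) * (R : ℤ))) * ((1 : ℝ) + (R : ℝ)) ^ (η - 1) *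
        (1 - (2 : ℝ) ^ ((1 : ℤ) - 2 * (r : ℤ))) ^ (-(η : ℤ)) := by
  obtain ⟨k, rfl⟩ : ∃ k, η = k + 1 := ⟨η - 1, by omega⟩
  simp only [Nat.add_sub_cancel]
  set x : ℝ := (2 : ℝ) ^ ((1 : ℤ) - 2 * (r : ℤ)) with hx
  have hx0 : 0 < x := by positivity
  have hx1 : x < 1 := zpow_lt_one_of_neg₀ (by norm_num) (by omega)
  let e : ℕ ≃ {ℓ : ℕ // R ≤ ℓ} :=
    { toFun := fun m => ⟨R + m, Nat.le_add_right R m⟩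
      invFun := fun l => l.1 - R
      left_inv := fun m => by simp
      right_inv := fun l => Subtype.ext (Nat.add_sub_cancel' l.2) }
  set c : ℝ := (2 : ℝ) ^ (-(2 * (r : ℤ) * (R : ℤ))) with hc
  have hc0 : 0 < c := by positivity
  have hs := (hasSum_choose_mul_geometric_of_norm_lt_one k
    (show ‖x‖ < 1 by rwa [Real.norm_of_nonneg hx0.le])).mul_left (c * (1 + (R : ℝ)) ^ k)
  have hterm : ∀ m : ℕ, ((k + (R + m)).choose k : ℝ) *
      (2 : ℝ) ^ (((R + m : ℕ) : ℤ) - (R : ℤ) - 2 * (r : ℤ) * ((R + m : ℕ) : ℤ)) =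
      ((R + m + k).choose k : ℝ) * (c * x ^ m) := by
    intro m
    rw [hc, hx, ← zpow_natCast, ← zpow_mul, ← zpow_add₀ (by norm_num), add_comm k]
    congr 2
    push_cast
    ring
  have hle : ∀ m : ℕ, ((R + m + k).choose k : ℝ) * (c * x ^ m) ≤
      c * (1 + (R : ℝ)) ^ k * ((m + k).choose k * x ^ m) := by
    intro m
    have h : ((R + m + k).choose k : ℝ) ≤ (1 + (R : ℝ)) ^ k * (m + k).choose k := by
      exact_mod_cast choose_shift_le R m k
    calc ((R + m + k).choose k : ℝ) * (c * x ^ m)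
        ≤ ((1 + (R : ℝ)) ^ k * (m + k).choose k) * (c * x ^ m) := by gcongr
      _ = _ := by ring
  rw [← e.tsum_eq]
  simp only [e, Equiv.coe_fn_mk, hterm]
  have hsum : Summable fun m : ℕ => ((R + m + k).choose k : ℝ) * (c * x ^ m) :=
    Summable.of_nonneg_of_le (fun m => by positivity) hle hs.summable
  refine (hsum.tsum_le_tsum hle hs.summable).trans_eq ?_
  rw [hs.tsum_eq, zpow_neg, zpow_natCast, one_div]
end
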